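/- In a valid ledger the first token entry for any asset is a mint: if bc is valid, the entry at position i of bc is a token entry for asset α, and no entry at a position j < i is a token entry for α, then the entry at position i is a mint of α. -/

import Mathlib

/-- An entry of the blockchain ledger. -/
inductive Entry (Agent Asset : Type*) where
  | mint (a : Agent) (α : Asset)
  | transfer (old new : Agent) (α : Asset)
  | pay (b s : Agent) (c : ℝ)

variable {Agent Asset : Type*}

/-- If `e` is a token entry for asset `α`, the agent it assigns ownership of `α` to;
otherwise `none`. -/
def tokenOwner [DecidableEq Asset] (e : Entry Agent Asset) (α : Asset) : Option Agent :=
  match e with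
  | .mint a β => if β = α then some a else none
  | .transfer _ new β => if β = α then some new else none
  | .pay _ _ _ => none

/-- `Owns bc a α`: some position of `bc` holds a token entry for `α` assigning
ownership to `a`, and no later position holds a token entry for `α`. -/
def Owns [DecidableEq Asset] (bc : List (Entry Agent Asset)) (a : Agent) (α : Asset) : Prop :=
  ∃ i : Fin bc.length, tokenOwner (bc.get i) α = some a ∧
    ∀ j : Fin bc.length, (i : ℕ) < (j : ℕ) → tokenOwner (bc.get j) α = none

/-- The current owner of `α`, computed by a left fold over the ledger. -/
def currentOwner [DecidableEq Asset] (bc : List (Entry Agent Asset)) (α : Asset) : Option Agent :=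
  bc.foldl (fun acc e => match tokenOwner e α with | some a => some a | none => acc) none

/-- A ledger is valid iff each mint concerns an asset currently unowned and each
transfer is from the current owner; payments have no precondition. -/
def Valid [DecidableEq Asset] (bc : List (Entry Agent Asset)) : Prop :=
  ∀ i : Fin bc.length,
    match bc.get i with
    | .mint _ α => currentOwner (bc.take i) α = none
    | .transfer old _ α => currentOwner (bc.take i) α = some old
    | .pay _ _ _ => True

/-- The list, in ledger order, of agents assigned ownership of `α` by the token
entries for `α` in `bc`. -/
def ownerHistory [DecidableEq Asset] (bc : List (Entry Agent Asset)) (α : Asset) : List Agent :=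
  bc.filterMap (fun e => tokenOwner e α)

/-- `isToken e` holds iff `e` is a mint or a transfer. -/
def isToken : Entry Agent Asset → Bool
  | .mint _ _ => true
  | .transfer _ _ _ => true
  | .pay _ _ _ => false

section

variable [DecidableEq Asset] {bc : List (Entry Agent Asset)} {α : Asset}

theorem tokenOwner_eq_some_iff {e : Entry Agent Asset} {a : Agent} :
    tokenOwner e α = some a ↔ e = .mint a α ∨ ∃ old, e = .transfer old a α := by
  cases e <;> simp [tokenOwner, and_comm]

theorem currentOwner_concat (bc : List (Entry Agent Asset)) (e : Entry Agent Asset) (α : Asset) :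
    currentOwner (bc ++ [e]) α = (tokenOwner e α).or (currentOwner bc α) := by
  rw [currentOwner, List.foldl_concat]
  cases tokenOwner e α <;> rfl

theorem currentOwner_eq_getLast?_ownerHistory (bc : List (Entry Agent Asset)) (α : Asset) :
    currentOwner bc α = (ownerHistory bc α).getLast? := by
  induction bc using List.reverseRecOn with
  | nil => rfl
  | append_singleton bc e ih =>
    rw [currentOwner_concat, ih, ownerHistory, ownerHistory, List.filterMap_append,
      List.getLast?_append]
    cases he : tokenOwner e α <;> simp [he]

theorem currentOwner_eq_none_iff :
    currentOwner bc α = none ↔ ∀ e ∈ bc, tokenOwner e α = none := by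
  rw [currentOwner_eq_getLast?_ownerHistory, List.getLast?_eq_none_iff, ownerHistory,
    List.filterMap_eq_nil_iff]

theorem currentOwner_take_eq_none_iff {n : ℕ} :
    currentOwner (bc.take n) α = none ↔
      ∀ j : Fin bc.length, (j : ℕ) < n → tokenOwner (bc.get j) α = none := by
  simp only [currentOwner_eq_none_iff, List.mem_take_iff_getElem, List.get_eq_getElem]
  constructor
  · intro h j hj
    exact h _ ⟨j, lt_min hj j.isLt, rfl⟩
  · rintro h _ ⟨j, hj, rfl⟩
    exact h ⟨j, hj.trans_le (min_le_right _ _)⟩ (hj.trans_le (min_le_left _ _))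

theorem Valid.currentOwner_take_of_get_eq_transfer (h : Valid bc) {i : Fin bc.length}
    {old new : Agent} (hi : bc.get i = .transfer old new α) :
    currentOwner (bc.take i) α = some old := by
  simpa only [hi] using h i

end

theorem first_token_is_mint [DecidableEq Asset] (bc : List (Entry Agent Asset))
    (h : Valid bc) (α : Asset) (i : Fin bc.length)
    (hi : (tokenOwner (bc.get i) α).isSome)
    (hfirst : ∀ j : Fin bc.length, (j : ℕ) < (i : ℕ) → tokenOwner (bc.get j) α = none) :
    ∃ a : Agent, bc.get i = Entry.mint a α := by
  have unowned : currentOwner (bc.take i) α = none := currentOwner_take_eq_none_iff.mpr hfirst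
  obtain ⟨a, ha⟩ := Option.isSome_iff_exists.mp hi
  obtain mint | ⟨old, transfer⟩ := tokenOwner_eq_some_iff.mp ha
  · exact ⟨a, mint⟩
  · have owned : currentOwner (bc.take i) α = some old :=
      h.currentOwner_take_of_get_eq_transfer transfer
    exact absurd (owned.symm.trans unowned) (Option.some_ne_none old)
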